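/- arXiv:2508.02083 — 4 statements merged into one kernel-verified Lean document; each statement's English description precedes it below -/
import Mathlib

section
/- Let K ⊆ L be a nonempty closed language that is CA-S-controllable with respect to L, Σ_uc and Σ_c^a, and CA-S-observable with respect to L, Σ_o and Φ. Then the state-estimate-based supervisor S_p defined by S_p(t) = Σ_uc ∪ {σ ∈ Σ : ∃ s' ∈ K, t ∈ Φ(s') ∧ s'σ ∈ K} satisfies L_r(S_p^a/G) = K. -/
/-!
Both inclusions go by induction on strings, appending one event at a time.

If `sσ` is in the small language with `s ∈ K` and `σ` controllable, then `σ` survives every attack,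
in particular the trivial one, so each possible observation `t ∈ Φ s` has a witness
`s' ∈ K` with `t ∈ Φ s'` and `s'σ ∈ K`; observability puts `sσ` in `K`. For uncontrollable `σ`
this is controllability. Conversely, if `sσ ∈ K`, then `s` itself is a witness for every `t ∈ Φ s`,
so the supervisor enables `σ`; since `K` avoids attackable events, no attack can remove `σ`.
-/

/-- A language is (prefix-)closed if it contains every prefix of each of its strings. -/
def PrefixClosed {E : Type*} (K : Set (List E)) : Prop :=
  ∀ s ∈ K, ∀ t : List E, t <+: s → t ∈ K

/-- The set of possible attacked control commands obtained from `γ` by removing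
and/or adding attackable controllable events in `Sca`. -/
def AttackedControls {E : Type*} (Sca : Set E) (γ : Set E) : Set (Set E) :=
  {γa | ∃ γ' γ'' : Set E, γ' ⊆ Sca ∧ γ'' ⊆ Sca ∧ γa = (γ \ γ') ∪ γ''}

/-- The small language `L_r(S^a/G)`, defined recursively: `ε` belongs to it, and
`sσ` belongs to it iff `s` does, `sσ ∈ L`, and `σ` is uncontrollable or enabled
by every possible attacked control command. `Suc` is the set of uncontrollable
events and `Sca` the set of attackable controllable events. -/
inductive SmallLang {E : Type*} (L : Set (List E)) (Suc Sca : Set E)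
    (Φ : List E → Set (List E)) (S : List E → Set E) : List E → Prop
  | nil : SmallLang L Suc Sca Φ S []
  | snoc (s : List E) (σ : E) :
      SmallLang L Suc Sca Φ S s →
      s ++ [σ] ∈ L →
      (σ ∈ Suc ∨ ∀ t ∈ Φ s, ∀ γa ∈ AttackedControls Sca (S t), σ ∈ γa) →
      SmallLang L Suc Sca Φ S (s ++ [σ])

/-- `K` is CA-S-controllable w.r.t. `L`, uncontrollable events `Suc`, and
attackable controllable events `Sca`: `K·Suc ∩ L ⊆ K` and `K ⊆ (Σ \ Sca)*`. -/
def CASControllable {E : Type*} (L K : Set (List E)) (Suc Sca : Set E) : Prop :=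
  (∀ s ∈ K, ∀ σ ∈ Suc, s ++ [σ] ∈ L → s ++ [σ] ∈ K) ∧
  (∀ s ∈ K, ∀ σ ∈ s, σ ∉ Sca)

/-- `K` is CA-S-observable w.r.t. `L` and the observation attack map `Φ`. -/
def CASObservable {E : Type*} (L K : Set (List E)) (Φ : List E → Set (List E)) : Prop :=
  ∀ s ∈ K, ∀ σ : E,
    (s ++ [σ] ∈ L ∧ ∀ t ∈ Φ s, ∃ s' ∈ K, t ∈ Φ s' ∧ s' ++ [σ] ∈ K) →
    s ++ [σ] ∈ K

/-- The trivial attack, which changes nothing, is always possible. -/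
theorem self_mem_attackedControls {E : Type*} (Sca γ : Set E) : γ ∈ AttackedControls Sca γ :=
  ⟨∅, ∅, Set.empty_subset _, Set.empty_subset _, by simp⟩

theorem mem_of_mem_attackedControls {E : Type*} {Sca γ γa : Set E} {σ : E}
    (h : γa ∈ AttackedControls Sca γ) (hσ : σ ∈ γ) (hσa : σ ∉ Sca) : σ ∈ γa := by
  obtain ⟨γ', γ'', h', -, rfl⟩ := h
  exact Or.inl ⟨hσ, fun hm => hσa (h' hm)⟩

/-- if `K` is CA-S-controllable and CA-S-observable, the
state-estimate-based supervisor `S_p` achieves `L_r(S_p^a/G) = K`. -/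
theorem smallLang_of_statEstimate_supervisor
    {E : Type*} (Sc Sca : Set E) (hSca : Sca ⊆ Sc)
    (L : Set (List E)) (hLne : L.Nonempty) (hLcl : PrefixClosed L)
    (Φ : List E → Set (List E))
    (K : Set (List E)) (hKne : K.Nonempty) (hKcl : PrefixClosed K) (hKL : K ⊆ L)
    (hc : CASControllable L K Scᶜ Sca)
    (ho : CASObservable L K Φ) :
    {s | SmallLang L Scᶜ Sca Φ
          (fun t => Scᶜ ∪ {σ : E | ∃ s' ∈ K, t ∈ Φ s' ∧ s' ++ [σ] ∈ K}) s} = K := by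
  obtain ⟨hcu, hca⟩ := hc
  ext s
  constructor
  · intro hs
    induction hs with
    | nil =>
      obtain ⟨u, hu⟩ := hKne
      exact hKcl u hu [] List.nil_prefix
    | snoc s σ _ hL hen ih =>
      by_cases hσ : σ ∈ Scᶜ
      · exact hcu s ih σ hσ hL
      · refine ho s ih σ ⟨hL, fun t ht => ?_⟩
        have hmem := hen.resolve_left hσ t ht _ (self_mem_attackedControls _ _)
        exact hmem.resolve_left hσ
  · intro hs
    induction s using List.reverseRecOn with
    | nil => exact SmallLang.nil
    | append_singleton s σ ih =>
      have hsK : s ∈ K := hKcl _ hs s (List.prefix_append _ _)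
      refine SmallLang.snoc s σ (ih hsK) (hKL hs) (Or.inr fun t ht γa hγa => ?_)
      exact mem_of_mem_attackedControls hγa (Or.inr ⟨s, hsK, ht, hs⟩) (hca _ hs σ (by simp))
end

section
/- Let K ⊆ L be a nonempty closed language. If there exists a supervisor S such that L_r(S^a/G) = K, then K is CA-S-observable with respect to L, Σ_o and Φ. -/
/-- Inversion of `SmallLang.snoc`: the last event of a string in the small language was
uncontrollable or robustly enabled. -/
theorem SmallLang.enabled_of_snoc {E : Type*} {L : Set (List E)} {Suc Sca : Set E}
    {Φ : List E → Set (List E)} {S : List E → Set E} {s : List E} {σ : E}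
    (h : SmallLang L Suc Sca Φ S (s ++ [σ])) :
    σ ∈ Suc ∨ ∀ t ∈ Φ s, ∀ γa ∈ AttackedControls Sca (S t), σ ∈ γa := by
  generalize hu : s ++ [σ] = u at h
  cases h with
  | nil => simp at hu
  | snoc s₀ σ₀ _ _ hen =>
    obtain ⟨rfl, hσ⟩ := List.append_inj' hu rfl
    obtain rfl : σ = σ₀ := by simpa using hσ
    exact hen

/-- if some supervisor achieves `L_r(S^a/G) = K`, then `K` is
CA-S-observable w.r.t. `L` and `Φ`. -/
theorem casObservable_of_exists_supervisor
    {E : Type*} (Sc Sca : Set E) (hSca : Sca ⊆ Sc)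
    (L : Set (List E)) (hLne : L.Nonempty) (hLcl : PrefixClosed L)
    (Φ : List E → Set (List E))
    (K : Set (List E)) (hKne : K.Nonempty) (hKcl : PrefixClosed K) (hKL : K ⊆ L)
    (hex : ∃ S : List E → Set E, (∀ t : List E, Scᶜ ⊆ S t) ∧
            {s | SmallLang L Scᶜ Sca Φ S s} = K) :
    CASObservable L K Φ := by
  obtain ⟨S, -, rfl⟩ := hex
  rintro s hs σ ⟨hsL, hobs⟩
  refine SmallLang.snoc s σ hs hsL ?_
  by_cases hσ : σ ∈ Scᶜ
  · exact Or.inl hσ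
  · refine Or.inr fun t ht => ?_
    obtain ⟨s', -, hts', hs'σ⟩ := hobs t ht
    exact (SmallLang.enabled_of_snoc hs'σ).resolve_left hσ t hts'
end

section
/- Assume Φ(s) ≠ ∅ for every s ∈ L. Then the language L_na = L ∩ (Σ \ Σ_c^a)* is CA-S-controllable with respect to L, Σ_uc and Σ_c^a, and CA-S-observable with respect to L, Σ_o and Φ. -/
/-- `L_na = L ∩ (Σ \ Sca)*` is CA-S-controllable and
CA-S-observable, provided `Φ(s) ≠ ∅` for every `s ∈ L`. -/
theorem lna_casControllable_and_casObservable
    {E : Type*} (Sc Sca : Set E) (hSca : Sca ⊆ Sc)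
    (L : Set (List E)) (hLne : L.Nonempty) (hLcl : PrefixClosed L)
    (Φ : List E → Set (List E)) (hΦ : ∀ s ∈ L, (Φ s).Nonempty) :
    CASControllable L {s ∈ L | ∀ σ ∈ s, σ ∉ Sca} Scᶜ Sca ∧
      CASObservable L {s ∈ L | ∀ σ ∈ s, σ ∉ Sca} Φ := by
  -- Extending a word of `L_na` inside `L` by an event outside `Sca` stays in `L_na`.
  have key : ∀ s ∈ {s ∈ L | ∀ σ ∈ s, σ ∉ Sca}, ∀ σ ∉ Sca, s ++ [σ] ∈ L →
      s ++ [σ] ∈ {s ∈ L | ∀ σ ∈ s, σ ∉ Sca} := by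
    intro s hs σ hσ hL
    refine ⟨hL, fun τ hτ => ?_⟩
    rcases List.mem_append.1 hτ with h | h
    · exact hs.2 τ h
    · rwa [List.mem_singleton.1 h]
  refine ⟨⟨fun s hs σ hσ hL => key s hs σ (fun h => hσ (hSca h)) hL, fun s hs => hs.2⟩, ?_⟩
  rintro s hs σ ⟨hL, h⟩
  -- One observation of `s` suffices: its witness `s' ++ [σ] ∈ L_na` shows `σ ∉ Sca`.
  obtain ⟨t, ht⟩ := hΦ s hs.1
  obtain ⟨s', -, -, hs'⟩ := h t ht
  exact key s hs σ (hs'.2 σ (by simp)) hL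
end

section
/- Assume Φ(s) ≠ ∅ for every s ∈ L, and let K_r be a nonempty closed language with K_r ⊆ L_na = L ∩ (Σ \ Σ_c^a)*. Then the family CACO(K_r) is nonempty, the language inf CACO(K_r) := ⋂_{M ∈ CACO(K_r)} M belongs to CACO(K_r), and it is the infimal (least) element of CACO(K_r): inf CACO(K_r) ⊆ M for every M ∈ CACO(K_r). Thus the infimal CA-S-controllable and CA-S-observable superlanguage of K_r exists. -/
/-- The family of closed CA-S-controllable and CA-S-observable superlanguages of
`Kr` contained in `L_na = L ∩ (Σ \ Sca)*`. -/
def CACO {E : Type*} (Sc Sca : Set E) (L : Set (List E))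
    (Φ : List E → Set (List E)) (Kr : Set (List E)) : Set (Set (List E)) :=
  {M | PrefixClosed M ∧ Kr ⊆ M ∧ M ⊆ {s ∈ L | ∀ σ ∈ s, σ ∉ Sca} ∧
        CASControllable L M Scᶜ Sca ∧ CASObservable L M Φ}

/-- The language `L_na` belongs to the family, which is therefore nonempty. -/
theorem naLang_mem_CACO {E : Type*} {Sc Sca : Set E} (hSca : Sca ⊆ Sc)
    {L : Set (List E)} (hLcl : PrefixClosed L)
    {Φ : List E → Set (List E)} (hΦ : ∀ s ∈ L, (Φ s).Nonempty)
    {Kr : Set (List E)} (hKr : Kr ⊆ {s ∈ L | ∀ σ ∈ s, σ ∉ Sca}) :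
    {s ∈ L | ∀ σ ∈ s, σ ∉ Sca} ∈ CACO Sc Sca L Φ Kr := by
  have snoc_mem : ∀ s : List E, (∀ τ ∈ s, τ ∉ Sca) → ∀ σ, σ ∉ Sca →
      ∀ τ ∈ s ++ [σ], τ ∉ Sca := by
    intro s hs σ hσ τ hτ
    rcases List.mem_append.1 hτ with h | h
    · exact hs τ h
    · rwa [List.mem_singleton.1 h]
  refine ⟨?_, hKr, subset_rfl, ⟨?_, fun s hs => hs.2⟩, ?_⟩
  · exact fun s hs t ht => ⟨hLcl s hs.1 t ht, fun σ hσ => hs.2 σ (ht.subset hσ)⟩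
  · exact fun s hs σ hσ hL => ⟨hL, snoc_mem s hs.2 σ fun h => hσ (hSca h)⟩
  · rintro s hs σ ⟨hL, hobs⟩
    obtain ⟨t, ht⟩ := hΦ s hs.1
    obtain ⟨s', -, -, hs'⟩ := hobs t ht
    exact ⟨hL, snoc_mem s hs.2 σ (hs'.2 σ (by simp))⟩

/-- The intersection of a nonempty `CACO` family belongs to it; nonemptiness is needed only for
the bounds `⊆ L` and `⊆ (Σ \ Sca)*`, the other conditions being stable under arbitrary
intersections. -/
theorem sInter_CACO_mem {E : Type*} {Sc Sca : Set E} {L : Set (List E)}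
    {Φ : List E → Set (List E)} {Kr : Set (List E)}
    (hne : (CACO Sc Sca L Φ Kr).Nonempty) :
    ⋂₀ (CACO Sc Sca L Φ Kr) ∈ CACO Sc Sca L Φ Kr := by
  obtain ⟨N, hN⟩ := hne
  have hle : ⋂₀ (CACO Sc Sca L Φ Kr) ⊆ {s ∈ L | ∀ σ ∈ s, σ ∉ Sca} :=
    (Set.sInter_subset_of_mem hN).trans hN.2.2.1
  refine ⟨?_, ?_, hle, ⟨?_, fun s hs => (hle hs).2⟩, ?_⟩
  · exact fun s hs t ht M hM => hM.1 s (hs M hM) t ht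
  · exact fun s hs M hM => hM.2.1 hs
  · exact fun s hs σ hσ hL M hM => hM.2.2.2.1.1 s (hs M hM) σ hσ hL
  · rintro s hs σ ⟨hL, hobs⟩ M hM
    refine hM.2.2.2.2 s (hs M hM) σ ⟨hL, fun t ht => ?_⟩
    obtain ⟨s', hs', hts', hs'σ⟩ := hobs t ht
    exact ⟨s', hs' M hM, hts', hs'σ M hM⟩

/-- Theorem 5: for `Kr ⊆ L_na`, the family `CACO(Kr)` is
nonempty and its intersection is its infimal element, i.e. the infimal
CA-S-controllable and CA-S-observable superlanguage of `Kr` exists. -/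
theorem infimal_caco_exists
    {E : Type*} (Sc Sca : Set E) (hSca : Sca ⊆ Sc)
    (L : Set (List E)) (hLne : L.Nonempty) (hLcl : PrefixClosed L)
    (Φ : List E → Set (List E)) (hΦ : ∀ s ∈ L, (Φ s).Nonempty)
    (Kr : Set (List E)) (hKne : Kr.Nonempty) (hKcl : PrefixClosed Kr)
    (hKr : Kr ⊆ {s ∈ L | ∀ σ ∈ s, σ ∉ Sca}) :
    (CACO Sc Sca L Φ Kr).Nonempty ∧
      ⋂₀ (CACO Sc Sca L Φ Kr) ∈ CACO Sc Sca L Φ Kr ∧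
      ∀ M ∈ CACO Sc Sca L Φ Kr, ⋂₀ (CACO Sc Sca L Φ Kr) ⊆ M := by
  have hne : (CACO Sc Sca L Φ Kr).Nonempty := ⟨_, naLang_mem_CACO hSca hLcl hΦ hKr⟩
  exact ⟨hne, sInter_CACO_mem hne, fun M hM => Set.sInter_subset_of_mem hM⟩
end
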